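/- Let n ≥ 2, let X be a set, and let R : X^n → X^n. Assume R satisfies the set-theoretic n-simplex equation, formulated as follows: for every map c_0 from the set of absolutely incoming (n−1)-faces of the (n+1)-cube I^{n+1} to X, there exists a permitted coloring of I^{n+1} whose restriction to the absolutely incoming (n−1)-faces is c_0. Then for every N ≥ n and every map c_0 from the set of absolutely incoming (n−1)-faces of I^N to X, there exists a unique permitted coloring of I^N whose restriction to the absolutely incoming (n−1)-faces is c_0. -/

import Mathlib

/-- A face of the `N`-dimensional cube `I^N`, encoded as a function assigning to each
coordinate position either a digit (`some false` = 0, `some true` = 1) or an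
asterisk (`none`). -/
abbrev CubeFace (N : ℕ) := Fin N → Option Bool

/-- `τ` is a `k`-face: exactly `k` positions carry an asterisk. -/
def IsFace {N : ℕ} (k : ℕ) (τ : CubeFace N) : Prop :=
  (Finset.filter (fun i => τ i = none) Finset.univ).card = k

/-- The digit `κ` associated to the asterisk position `p` of `f`: if `p` is the `k`-th
asterisk position of `f` (counting 1-based from the left), then `κ = 0` (i.e. `false`)
for odd `k` and `κ = 1` (i.e. `true`) for even `k`.  Equivalently, `κ` is `true` iff the
number of asterisk positions strictly before `p` is odd. -/
def kappa {N : ℕ} (f : CubeFace N) (p : Fin N) : Bool :=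
  decide (Odd ((Finset.filter (fun q => q < p ∧ f q = none) Finset.univ).card))

/-- `g` is obtained from `f` by replacing the asterisk at position `p` by the digit `d`. -/
def SubfaceAt {N : ℕ} (f g : CubeFace N) (p : Fin N) (d : Bool) : Prop :=
  f p = none ∧ g p = some d ∧ ∀ q, q ≠ p → g q = f q

/-- `g` is an incoming subface of `f`: it is obtained from `f` by replacing the asterisk
at some position `p` by the digit `κ(f, p)`. -/
def Incoming {N : ℕ} (f g : CubeFace N) : Prop := ∃ p, SubfaceAt f g p (kappa f p)

/-- `g` is an outgoing subface of `f`: it is obtained from `f` by replacing the asterisk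
at some position `p` by the digit different from `κ(f, p)`. -/
def Outgoing {N : ℕ} (f g : CubeFace N) : Prop := ∃ p, SubfaceAt f g p (!kappa f p)

/-- The order of a face `g`: the number of `n`-faces of the cube for which `g` is an
incoming subface. -/
noncomputable def faceOrder {N : ℕ} (n : ℕ) (g : CubeFace N) : ℕ :=
  Nat.card {f : CubeFace N // IsFace n f ∧ Incoming f g}

/-- The subtype of `k`-faces of `I^N`. -/
def FaceT (N k : ℕ) := {τ : CubeFace N // IsFace k τ}

/-- The incoming subface of an `n`-face `f` obtained by replacing the asterisk at
position `p` by the digit `κ(f, p)`. -/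
def inAt {N : ℕ} (f : CubeFace N) (p : Fin N) : CubeFace N :=
  fun q => if q = p then some (kappa f p) else f q

/-- The outgoing subface of an `n`-face `f` obtained by replacing the asterisk at
position `p` by the digit different from `κ(f, p)`. -/
def outAt {N : ℕ} (f : CubeFace N) (p : Fin N) : CubeFace N :=
  fun q => if q = p then some (!kappa f p) else f q

/-- A coloring `c` of the `(n-1)`-faces of `I^N` is permitted with respect to
`R : Xⁿ → Xⁿ` if for every `n`-face `f`, with asterisk positions enumerated in
increasing order by `p : Fin n → Fin N`, the colors of the outgoing `(n-1)`-subfaces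
(listed in increasing order of the replaced asterisk position) are the image under `R`
of the colors of the incoming `(n-1)`-subfaces (listed likewise). -/
def Permitted {N n : ℕ} {X : Type*} (R : (Fin n → X) → (Fin n → X))
    (c : FaceT N (n - 1) → X) : Prop :=
  ∀ f : CubeFace N, IsFace n f →
    ∀ p : Fin n → Fin N, StrictMono p → (∀ k, f (p k) = none) →
      ∀ gIn gOut : Fin n → FaceT N (n - 1),
        (∀ k, (gIn k).1 = inAt f (p k)) → (∀ k, (gOut k).1 = outAt f (p k)) →
        (fun k => c (gOut k)) = R (fun k => c (gIn k))

/-- The absolutely incoming `(n-1)`-faces of `I^N`: those of maximal order `N - n + 1`. -/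
def AbsIn (N n : ℕ) := {g : FaceT N (n - 1) // faceOrder n g.1 = N - n + 1}

/-- Restriction of a coloring to the absolutely incoming `(n-1)`-faces. -/
def resAbs {N n : ℕ} {X : Type*} (c : FaceT N (n - 1) → X) : AbsIn N n → X :=
  fun g => c g.1

/-!
A coloring `c` is permitted iff it solves the equation `c(h_k) = R(c(g_1), …, c(g_n))_k` for each
`n`-face and each of its outgoing subfaces `h_k`, and the absolutely incoming faces are those on
the left-hand side of no equation. Give each position of a face the value 0, 1 or 2 according to
whether it carries an incoming digit, an asterisk or an outgoing digit. In the lexicographic order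
on these words every incoming subface of `f` precedes `f`, which precedes every outgoing one, so the
equations can be read as a recursion along a well-founded order. This yields uniqueness, and also
a coloring satisfying one equation for each face that is not absolutely incoming.

A face `g` may be on the left of several equations, one for each outgoing digit. Two of them involve
`n`-faces lying in a common `(n+1)`-face of the cube. By the simplex equation, this `(n+1)`-face has
a permitted coloring which agrees with the recursive one on its absolutely incoming faces, hence, by
induction, on all its faces preceding `g`. So both equations prescribe for `g` the color given by
this permitted coloring.
-/

namespace CubeFace

variable {N m k : ℕ}

/-- The set of asterisk positions of a face. -/
def stars (f : CubeFace N) : Finset (Fin N) := {p | f p = none}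

@[simp]
theorem mem_stars {f : CubeFace N} {p : Fin N} : p ∈ f.stars ↔ f p = none := by
  simp [stars]

theorem stars_update_none (f : CubeFace N) (p : Fin N) :
    stars (Function.update f p none) = insert p f.stars := by
  ext q
  by_cases hq : q = p <;> simp [hq]

theorem stars_update_some (f : CubeFace N) (p : Fin N) (d : Bool) :
    stars (Function.update f p (some d)) = f.stars.erase p := by
  ext q
  by_cases hq : q = p <;> simp [hq]

theorem isFace_update_none {f : CubeFace N} {p : Fin N} (hf : IsFace k f) (hp : f p ≠ none) :
    IsFace (k + 1) (Function.update f p none) := by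
  change (stars _).card = _
  rw [stars_update_none, Finset.card_insert_of_notMem (by simpa using hp)]
  exact congrArg (· + 1) hf

theorem isFace_update_some {f : CubeFace N} {p : Fin N} (hf : IsFace (k + 1) f)
    (hp : f p = none) (d : Bool) : IsFace k (Function.update f p (some d)) := by
  change (stars _).card = _
  rw [stars_update_some, Finset.card_erase_of_mem (by simpa using hp)]
  exact congrArg (· - 1) hf

theorem inAt_eq_update (f : CubeFace N) (p : Fin N) :
    inAt f p = Function.update f p (some (kappa f p)) :=
  funext fun q => (Function.update_apply f p _ q).symm

theorem outAt_eq_update (f : CubeFace N) (p : Fin N) :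
    outAt f p = Function.update f p (some (!kappa f p)) :=
  funext fun q => (Function.update_apply f p _ q).symm

theorem kappa_congr {f g : CubeFace N} {p : Fin N} (h : ∀ q < p, f q = g q) :
    kappa f p = kappa g p := by
  unfold kappa
  congr! 4 with q
  exact and_congr_right fun hq => by rw [h q hq]

@[simp]
theorem kappa_update_self (f : CubeFace N) (p : Fin N) (a : Option Bool) :
    kappa (Function.update f p a) p = kappa f p :=
  kappa_congr fun _ hq => Function.update_of_ne hq.ne _ _

theorem outAt_update_none {g : CubeFace N} {p : Fin N} (h : g p = some (!kappa g p)) :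
    outAt (Function.update g p none) p = g := by
  rw [outAt_eq_update, kappa_update_self, Function.update_idem, ← h, Function.update_eq_self]

theorem update_outAt_none {f : CubeFace N} {p : Fin N} (h : f p = none) :
    Function.update (outAt f p) p none = f := by
  rw [outAt_eq_update, Function.update_idem, ← h, Function.update_eq_self]

theorem outAt_self (f : CubeFace N) (p : Fin N) : outAt f p p = some (!kappa (outAt f p) p) := by
  simp [outAt_eq_update]

/-- The value of the position `p` in the order of recursion: 0 for an incoming digit, 1 for an
asterisk, 2 for an outgoing digit. -/
def symbolRank (f : CubeFace N) (p : Fin N) : Fin 3 :=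
  if f p = none then 1 else if f p = some (kappa f p) then 0 else 2

/-- The word of symbol ranks of a face; its lexicographic order is the order in which a permitted
coloring is determined. -/
def rank (f : CubeFace N) : Lex (Fin N → Fin 3) := toLex f.symbolRank

theorem symbolRank_congr {f g : CubeFace N} {p : Fin N} (h : ∀ q ≤ p, f q = g q) :
    f.symbolRank p = g.symbolRank p := by
  unfold symbolRank
  rw [h p le_rfl, kappa_congr fun q hq => h q hq.le]

theorem rank_lt_rank {f g : CubeFace N} {p : Fin N} (h : ∀ q < p, f q = g q)
    (hp : f.symbolRank p < g.symbolRank p) : f.rank < g.rank :=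
  ⟨p, fun _ hq => symbolRank_congr fun r hr => h r (hr.trans_lt hq), hp⟩

theorem rank_inAt_lt {f : CubeFace N} {p : Fin N} (hp : f p = none) :
    (inAt f p).rank < f.rank := by
  rw [inAt_eq_update]
  exact rank_lt_rank (fun q hq => Function.update_of_ne hq.ne _ _) (by simp [symbolRank, hp])

theorem rank_lt_rank_outAt {f : CubeFace N} {p : Fin N} (hp : f p = none) :
    f.rank < (outAt f p).rank := by
  rw [outAt_eq_update]
  exact rank_lt_rank (fun q hq => (Function.update_of_ne hq.ne _ _).symm)
    (by simp [symbolRank, hp])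

theorem incoming_iff {f g : CubeFace N} :
    Incoming f g ↔ ∃ p, g p = some (kappa g p) ∧ Function.update g p none = f := by
  constructor
  · rintro ⟨p, hfp, hgp, hne⟩
    have hf : Function.update g p none = f := Function.update_eq_iff.2 ⟨hfp.symm, hne⟩
    exact ⟨p, by rw [hgp, ← hf, kappa_update_self], hf⟩
  · rintro ⟨p, hgp, rfl⟩
    exact ⟨p, by simp, by simpa using hgp, fun q hq => by simp [hq]⟩

theorem faceOrder_eq_card {g : CubeFace N} (hg : IsFace m g) :
    faceOrder (m + 1) g = (g.starsᶜ.filter fun p => g p = some (kappa g p)).card := by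
  have hinj : Set.InjOn (fun p => Function.update g p none) (g.starsᶜ : Finset (Fin N)) := by
    intro p hp q _ hpq
    by_contra hne
    have hgp : none = g p := by simpa [hne] using congrFun hpq p
    simp [← hgp] at hp
  rw [← Finset.card_image_of_injOn (hinj.mono (Finset.coe_subset.2 (Finset.filter_subset _ _)))]
  refine Nat.subtype_card _ fun f => ?_
  simp only [incoming_iff, Finset.mem_image, Finset.mem_filter, Finset.mem_compl, mem_stars]
  constructor
  · rintro ⟨p, ⟨hp, hgp⟩, rfl⟩
    exact ⟨isFace_update_none hg hp, p, hgp, rfl⟩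
  · rintro ⟨-, p, hgp, rfl⟩
    exact ⟨p, ⟨by simp [hgp], hgp⟩, rfl⟩

theorem faceOrder_eq_iff (hN : m + 1 ≤ N) {g : CubeFace N} (hg : IsFace m g) :
    faceOrder (m + 1) g = N - (m + 1) + 1 ↔ ∀ p, g p ≠ some (!kappa g p) := by
  have hdigits : N - (m + 1) + 1 = g.starsᶜ.card := by
    have hstars : g.stars.card = m := hg
    rw [Finset.card_compl, Fintype.card_fin, hstars]
    lia
  rw [faceOrder_eq_card hg, hdigits, Finset.card_filter_eq_iff]
  refine forall_congr' fun p => ?_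
  rcases h : g p with _ | d
  · simp [h]
  · simp [h, Bool.eq_not]

end CubeFace

namespace FaceT

open CubeFace

variable {N M m k : ℕ}

/-- The increasing enumeration of the asterisk positions of a `k`-face. -/
def starEmb (f : FaceT N k) : Fin k ↪o Fin N := f.1.stars.orderEmbOfFin f.2

@[simp]
theorem apply_starEmb (f : FaceT N k) (j : Fin k) : f.1 (f.starEmb j) = none :=
  mem_stars.1 (Finset.orderEmbOfFin_mem _ _ j)

theorem exists_starEmb_eq {f : FaceT N k} {p : Fin N} : (∃ j, f.starEmb j = p) ↔ f.1 p = none := by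
  rw [← mem_stars, ← Finset.mem_coe, ← Finset.range_orderEmbOfFin f.1.stars f.2]
  rfl

theorem eq_starEmb {f : FaceT N k} {e : Fin k → Fin N} (he : StrictMono e)
    (hf : ∀ j, f.1 (e j) = none) : e = f.starEmb :=
  Finset.orderEmbOfFin_unique f.2 (fun j => mem_stars.2 (hf j)) he

/-- The `j`-th incoming subface. -/
def inFace (f : FaceT N (m + 1)) (j : Fin (m + 1)) : FaceT N m :=
  ⟨inAt f.1 (f.starEmb j),
    inAt_eq_update f.1 _ ▸ isFace_update_some f.2 (f.apply_starEmb j) _⟩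

/-- The `j`-th outgoing subface. -/
def outFace (f : FaceT N (m + 1)) (j : Fin (m + 1)) : FaceT N m :=
  ⟨outAt f.1 (f.starEmb j),
    outAt_eq_update f.1 _ ▸ isFace_update_some f.2 (f.apply_starEmb j) _⟩

theorem update_outFace_none (f : FaceT N (m + 1)) (j : Fin (m + 1)) :
    Function.update (f.outFace j).1 (f.starEmb j) none = f.1 :=
  update_outAt_none (f.apply_starEmb j)

theorem outFace_injective (f : FaceT N (m + 1)) : Function.Injective f.outFace := by
  intro i j hij
  by_contra hne
  have h := congrFun (congrArg Subtype.val hij) (f.starEmb i)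
  simp [outFace, outAt, hne] at h

theorem rank_inFace_lt_rank_outFace (f : FaceT N (m + 1)) (i j : Fin (m + 1)) :
    (f.inFace i).1.rank < (f.outFace j).1.rank :=
  (rank_inAt_lt (f.apply_starEmb i)).trans (rank_lt_rank_outAt (f.apply_starEmb j))

theorem wellFounded_rank : WellFounded fun g g' : FaceT N m => g.1.rank < g'.1.rank :=
  InvImage.wf (fun g : FaceT N m => g.1.rank) wellFounded_lt

/-- A face which is an outgoing subface of no `(m + 1)`-face. For `m < N` these are the absolutely
incoming faces. -/
def IsInitial (g : FaceT N m) : Prop := ∀ (f : FaceT N (m + 1)) (j : Fin (m + 1)), f.outFace j ≠ g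

theorem not_isInitial_iff {g : FaceT N m} : ¬ IsInitial g ↔ ∃ f j, outFace f j = g := by
  simp [IsInitial]

theorem isInitial_iff {g : FaceT N m} : IsInitial g ↔ ∀ p, g.1 p ≠ some (!kappa g.1 p) := by
  constructor
  · intro hg p hp
    let f : FaceT N (m + 1) := ⟨_, isFace_update_none g.2 (p := p) (by simp [hp])⟩
    obtain ⟨j, hj⟩ := exists_starEmb_eq.2 (show f.1 p = none from Function.update_self ..)
    refine hg f j (Subtype.ext ?_)
    change outAt f.1 (f.starEmb j) = g.1
    rw [hj, outAt_update_none hp]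
  · rintro hg f j rfl
    exact hg _ (outAt_self _ _)

theorem faceOrder_eq_iff_isInitial (hN : m + 1 ≤ N) (g : FaceT N m) :
    faceOrder (m + 1) g.1 = N - (m + 1) + 1 ↔ IsInitial g :=
  (faceOrder_eq_iff hN g.2).trans isInitial_iff.symm

/-- The face of `I^N` contained in the `M`-face `h` that corresponds to the face `τ` of `I^M` when
`h` is identified with `I^M`. -/
noncomputable def subst (h : FaceT N M) (τ : CubeFace M) : CubeFace N :=
  Function.extend h.starEmb τ h.1

@[simp]
theorem subst_starEmb (h : FaceT N M) (τ : CubeFace M) (j : Fin M) :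
    h.subst τ (h.starEmb j) = τ j :=
  h.starEmb.injective.extend_apply _ _ _

theorem eq_subst_iff {h : FaceT N M} {τ : CubeFace M} {x : CubeFace N} :
    x = h.subst τ ↔ (∀ j, x (h.starEmb j) = τ j) ∧ ∀ p, h.1 p ≠ none → x p = h.1 p := by
  have hdigit : ∀ p, h.1 p ≠ none → h.subst τ p = h.1 p := fun p hp =>
    Function.extend_apply' _ _ _ fun hj => hp (exists_starEmb_eq.1 hj)
  constructor
  · rintro rfl
    exact ⟨h.subst_starEmb τ, hdigit⟩
  · rintro ⟨hstar, hx⟩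
    funext p
    by_cases hp : h.1 p = none
    · obtain ⟨j, rfl⟩ := exists_starEmb_eq.2 hp
      rw [hstar, subst_starEmb]
    · rw [hx p hp, hdigit p hp]

theorem stars_subst (h : FaceT N M) (τ : CubeFace M) :
    (h.subst τ).stars = τ.stars.map h.starEmb.toEmbedding := by
  ext p
  rw [mem_stars, Finset.mem_map]
  constructor
  · intro hp
    have hhp : h.1 p = none := by
      by_contra hne
      exact hne ((eq_subst_iff.1 rfl).2 p hne ▸ hp)
    obtain ⟨j, rfl⟩ := exists_starEmb_eq.2 hhp
    exact ⟨j, by simpa using hp, rfl⟩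
  · rintro ⟨j, hj, rfl⟩
    simpa using hj

theorem isFace_subst_iff {h : FaceT N M} {τ : CubeFace M} :
    IsFace k (h.subst τ) ↔ IsFace k τ := by
  change (stars _).card = k ↔ τ.stars.card = k
  rw [stars_subst, Finset.card_map]

theorem kappa_subst (h : FaceT N M) (τ : CubeFace M) (j : Fin M) :
    kappa (h.subst τ) (h.starEmb j) = kappa τ j := by
  have hkappa : ∀ {L : ℕ} (f : CubeFace L) (p : Fin L),
      kappa f p = decide (Odd (f.stars.filter (· < p)).card) := fun f p => by
    simp only [kappa, stars, Finset.filter_filter, and_comm]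
  rw [hkappa, hkappa, stars_subst, Finset.filter_map, Finset.card_map]
  simp

theorem subst_update (h : FaceT N M) (τ : CubeFace M) (j : Fin M) (a : Option Bool) :
    h.subst (Function.update τ j a) = Function.update (h.subst τ) (h.starEmb j) a := by
  symm
  refine eq_subst_iff.2 ⟨fun i => ?_, fun p hp => ?_⟩
  · simp [Function.update_apply]
  · have hne : p ≠ h.starEmb j := by
      rintro rfl
      exact hp (h.apply_starEmb j)
    rw [Function.update_of_ne hne, (eq_subst_iff.1 rfl).2 p hp]

/-- The inclusion of the `k`-faces of an `M`-face `h`, identified with `I^M`, into those of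
`I^N`. -/
noncomputable def embed (h : FaceT N M) (τ : FaceT M k) : FaceT N k :=
  ⟨h.subst τ.1, isFace_subst_iff.2 τ.2⟩

theorem starEmb_embed (h : FaceT N M) (τ : FaceT M k) (j : Fin k) :
    (h.embed τ).starEmb j = h.starEmb (τ.starEmb j) := by
  refine (congrFun (eq_starEmb (f := h.embed τ)
    (h.starEmb.strictMono.comp τ.starEmb.strictMono) fun i => ?_) j).symm
  simp [embed]

theorem embed_inFace (h : FaceT N M) (σ : FaceT M (m + 1)) (j : Fin (m + 1)) :
    h.embed (σ.inFace j) = (h.embed σ).inFace j := by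
  apply Subtype.ext
  simp only [inFace, starEmb_embed]
  simp only [embed, inAt_eq_update, subst_update, kappa_subst]

theorem embed_outFace (h : FaceT N M) (σ : FaceT M (m + 1)) (j : Fin (m + 1)) :
    h.embed (σ.outFace j) = (h.embed σ).outFace j := by
  apply Subtype.ext
  simp only [outFace, starEmb_embed]
  simp only [embed, outAt_eq_update, subst_update, kappa_subst]

theorem embed_injective (h : FaceT N M) : Function.Injective (h.embed (k := k)) := by
  intro σ τ hστ
  apply Subtype.ext
  funext j
  simpa [embed] using congrFun (congrArg Subtype.val hστ) (h.starEmb j)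

theorem exists_embed_eq {h : FaceT N M} {x : FaceT N k} (hx : ∀ p, h.1 p ≠ none → x.1 p = h.1 p) :
    ∃ τ, h.embed τ = x := by
  have hsubst : x.1 = h.subst (x.1 ∘ h.starEmb) := eq_subst_iff.2 ⟨fun _ => rfl, hx⟩
  exact ⟨⟨x.1 ∘ h.starEmb, isFace_subst_iff.1 (hsubst ▸ x.2)⟩, Subtype.ext hsubst.symm⟩

theorem exists_common_face {f f' : FaceT N (m + 1)} {j j' : Fin (m + 1)} (hne : f ≠ f')
    (hout : f.outFace j = f'.outFace j') :
    ∃ (h : FaceT N (m + 2)) (σ σ' : FaceT (m + 2) (m + 1)),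
      h.embed σ = f ∧ h.embed σ' = f' ∧ σ.outFace j = σ'.outFace j' := by
  set g := f.outFace j
  set p := f.starEmb j
  set p' := f'.starEmb j'
  have hf : Function.update g.1 p none = f.1 := f.update_outFace_none j
  have hf' : Function.update g.1 p' none = f'.1 := hout ▸ f'.update_outFace_none j'
  have hpp' : p' ≠ p := fun h => hne (Subtype.ext (by rw [← hf, ← hf', h]))
  have hgp' : g.1 p' ≠ none := by simp [hout, outFace, outAt, p']
  have hfp' : f.1 p' ≠ none := by rwa [← hf, Function.update_of_ne hpp']
  let h : FaceT N (m + 2) := ⟨Function.update f.1 p' none, isFace_update_none f.2 hfp'⟩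
  have hfh : ∀ q, h.1 q ≠ none → q ≠ p' ∧ h.1 q = f.1 q := fun q hq => by
    have hqp' : q ≠ p' := by
      rintro rfl
      exact hq (Function.update_self ..)
    exact ⟨hqp', Function.update_of_ne hqp' ..⟩
  obtain ⟨σ, hσ⟩ := exists_embed_eq (h := h) (x := f) fun q hq => (hfh q hq).2.symm
  obtain ⟨σ', hσ'⟩ := exists_embed_eq (h := h) (x := f') fun q hq => by
    obtain ⟨hqp', hhq⟩ := hfh q hq
    have hqp : q ≠ p := by
      rintro rfl
      exact hq (hhq.trans (f.apply_starEmb j))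
    rw [hhq, ← hf, ← hf', Function.update_of_ne hqp, Function.update_of_ne hqp']
  refine ⟨h, σ, σ', hσ, hσ', h.embed_injective ?_⟩
  rw [embed_outFace, embed_outFace, hσ, hσ', ← hout]

end FaceT

section Coloring

open FaceT

variable {N M m : ℕ} {X : Type*} {R : (Fin (m + 1) → X) → (Fin (m + 1) → X)}
  {c c' : FaceT N m → X}

/-- The equation that `R` imposes on a coloring at the `j`-th outgoing subface of `f`. -/
def SatisfiesAt (R : (Fin (m + 1) → X) → (Fin (m + 1) → X)) (c : FaceT N m → X)
    (f : FaceT N (m + 1)) (j : Fin (m + 1)) : Prop :=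
  c (f.outFace j) = R (fun i => c (f.inFace i)) j

theorem permitted_iff : Permitted (n := m + 1) R c ↔ ∀ f j, SatisfiesAt R c f j := by
  constructor
  · intro hc f j
    exact congrFun (hc f.1 f.2 f.starEmb f.starEmb.strictMono f.apply_starEmb f.inFace f.outFace
      (fun _ => rfl) fun _ => rfl) j
  · intro hc f hf p hp hstar gIn gOut hIn hOut
    let F : FaceT N (m + 1) := ⟨f, hf⟩
    obtain rfl : p = F.starEmb := eq_starEmb hp hstar
    obtain rfl : gIn = F.inFace := funext fun j => Subtype.ext (hIn j)
    obtain rfl : gOut = F.outFace := funext fun j => Subtype.ext (hOut j)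
    exact funext (hc F)

theorem eqOn_of_satisfiesAt {S : Set (FaceT N m)}
    (hS : ∀ f j, outFace f j ∈ S → ∀ i, f.inFace i ∈ S)
    (hc : ∀ f j, outFace f j ∈ S → SatisfiesAt R c f j)
    (hc' : ∀ f j, outFace f j ∈ S → SatisfiesAt R c' f j)
    (hinit : ∀ g ∈ S, IsInitial g → c g = c' g) : Set.EqOn c c' S := by
  intro g
  induction g using wellFounded_rank.induction with
  | _ g ih =>
  intro hgS
  by_cases hg : IsInitial g
  · exact hinit g hgS hg
  · obtain ⟨f, j, rfl⟩ := not_isInitial_iff.1 hg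
    have hin : ∀ i, c (f.inFace i) = c' (f.inFace i) := fun i =>
      ih _ (f.rank_inFace_lt_rank_outFace i j) (hS f j hgS i)
    rw [hc f j hgS, hc' f j hgS, funext hin]

theorem exists_satisfiesAt (R : (Fin (m + 1) → X) → (Fin (m + 1) → X))
    (c₀ : ∀ g : FaceT N m, IsInitial g → X) :
    ∃ c : FaceT N m → X, (∀ g hg, c g = c₀ g hg) ∧
      ∀ g, ¬ IsInitial g → ∃ f j, outFace f j = g ∧ SatisfiesAt R c f j := by
  classical
  choose f j hout using fun (g : FaceT N m) (hg : ¬ IsInitial g) => not_isInitial_iff.1 hg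
  have hlt : ∀ g hg i, ((f g hg).inFace i).1.rank < g.1.rank := fun g hg i =>
    ((f g hg).rank_inFace_lt_rank_outFace i (j g hg)).trans_eq (by rw [hout])
  let step (g : FaceT N m) (rec : ∀ g' : FaceT N m, g'.1.rank < g.1.rank → X) : X :=
    if hg : IsInitial g then c₀ g hg else R (fun i => rec _ (hlt g hg i)) (j g hg)
  have hfix := wellFounded_rank.fix_eq step
  refine ⟨wellFounded_rank.fix step, fun g hg => (hfix g).trans (dif_pos hg), fun g hg => ?_⟩
  refine ⟨f g hg, j g hg, hout g hg, ?_⟩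
  unfold SatisfiesAt
  rw [hout g hg]
  exact (hfix g).trans (dif_neg hg)

theorem satisfiesAt_comp_embed {h : FaceT N M} {σ : FaceT M (m + 1)} {j : Fin (m + 1)} :
    SatisfiesAt R (c ∘ h.embed) σ j ↔ SatisfiesAt R c (h.embed σ) j := by
  simp only [SatisfiesAt, Function.comp_apply, embed_outFace, embed_inFace]

/-- The set-theoretic `(m + 1)`-simplex equation for `R`. The colors of the initial faces are
prescribed by a coloring `d` of all faces, of which only the values at initial faces matter. -/
def SimplexEquation (R : (Fin (m + 1) → X) → (Fin (m + 1) → X)) : Prop :=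
  ∀ d : FaceT (m + 2) m → X,
    ∃ c : FaceT (m + 2) m → X, Permitted (n := m + 1) R c ∧ ∀ g, IsInitial g → c g = d g

theorem SimplexEquation.satisfiesAt_of_outFace_eq (hR : SimplexEquation R)
    {f f' : FaceT N (m + 1)} {j j' : Fin (m + 1)} (hout : f.outFace j = f'.outFace j')
    (hlt : ∀ e i, (outFace e i).1.rank < (f.outFace j).1.rank → SatisfiesAt R c e i)
    (hf : SatisfiesAt R c f j) : SatisfiesAt R c f' j' := by
  by_cases hff' : f = f'
  · subst hff'
    rwa [← f.outFace_injective hout]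
  obtain ⟨h, σ, σ', rfl, rfl, hσ⟩ := exists_common_face hff' hout
  obtain ⟨C, hC, hCinit⟩ := hR (c ∘ h.embed)
  rw [permitted_iff] at hC
  have hin : ∀ (e : FaceT (m + 2) (m + 1)) (i l : Fin (m + 1)),
      (h.embed (e.inFace i)).1.rank < (h.embed (e.outFace l)).1.rank := fun e i l => by
    rw [embed_inFace, embed_outFace]
    exact rank_inFace_lt_rank_outFace _ i l
  have hagree : Set.EqOn C (c ∘ h.embed)
      {τ | (h.embed τ).1.rank < (h.embed (σ.outFace j)).1.rank} := by
    refine eqOn_of_satisfiesAt (fun e l he i => (hin e i l).trans he) (fun e l _ => hC e l)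
      (fun e l he => satisfiesAt_comp_embed.2 (hlt _ l ?_)) fun τ _ => hCinit τ
    rwa [← embed_outFace, ← embed_outFace]
  have hσin : ∀ i, C (σ.inFace i) = (c ∘ h.embed) (σ.inFace i) := fun i => hagree (hin σ i j)
  have hσ'in : ∀ i, C (σ'.inFace i) = (c ∘ h.embed) (σ'.inFace i) := fun i =>
    hagree ((hin σ' i j').trans_eq (by rw [hσ]))
  rw [← satisfiesAt_comp_embed] at hf ⊢
  calc (c ∘ h.embed) (σ'.outFace j')
    _ = (c ∘ h.embed) (σ.outFace j) := by rw [hσ]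
    _ = R (fun i => (c ∘ h.embed) (σ.inFace i)) j := hf
    _ = C (σ.outFace j) := by rw [← funext hσin, hC σ j]
    _ = C (σ'.outFace j') := by rw [hσ]
    _ = R (fun i => (c ∘ h.embed) (σ'.inFace i)) j' := by rw [hC σ' j', funext hσ'in]

theorem SimplexEquation.permitted (hR : SimplexEquation R)
    (hc : ∀ g, ¬ IsInitial g → ∃ f j, outFace f j = g ∧ SatisfiesAt R c f j) :
    Permitted (n := m + 1) R c := by
  have hall : ∀ (g : FaceT N m) (f : FaceT N (m + 1)) (j : Fin (m + 1)),
      f.outFace j = g → SatisfiesAt R c f j := by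
    intro g
    induction g using wellFounded_rank.induction with
    | _ g ih =>
    intro f j hfj
    obtain ⟨f', j', rfl, hf'⟩ := hc g (not_isInitial_iff.2 ⟨f, j, hfj⟩)
    exact hR.satisfiesAt_of_outFace_eq hfj.symm (fun e i hlt => ih _ hlt e i rfl) hf'
  exact permitted_iff.2 fun f j => hall _ f j rfl

theorem SimplexEquation.existsUnique_permitted (hR : SimplexEquation R)
    (c₀ : ∀ g : FaceT N m, IsInitial g → X) :
    ∃! c : FaceT N m → X, Permitted (n := m + 1) R c ∧ ∀ g hg, c g = c₀ g hg := by
  obtain ⟨c, hc₀, hc⟩ := exists_satisfiesAt R c₀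
  have hperm := hR.permitted hc
  refine ⟨c, ⟨hperm, hc₀⟩, fun c' ⟨hperm', hc₀'⟩ => Set.eqOn_univ c' c |>.1 ?_⟩
  exact eqOn_of_satisfiesAt (fun _ _ _ _ => trivial) (fun f j _ => permitted_iff.1 hperm' f j)
    (fun f j _ => permitted_iff.1 hperm f j) fun g _ hg => (hc₀' g hg).trans (hc₀ g hg).symm

theorem resAbs_eq_iff (hN : m + 1 ≤ N) {c₀ : AbsIn N (m + 1) → X} :
    resAbs (n := m + 1) c = c₀ ↔
      ∀ g hg, c g = c₀ ⟨g, (faceOrder_eq_iff_isInitial hN g).2 hg⟩ :=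
  ⟨fun h g hg => congrFun h ⟨g, (faceOrder_eq_iff_isInitial hN g).2 hg⟩,
    fun h => funext fun g => h g.1 ((faceOrder_eq_iff_isInitial hN g.1).1 g.2)⟩

end Coloring

/-- If `R` satisfies the set-theoretic `n`-simplex equation — formulated as: every
coloring of the absolutely incoming `(n-1)`-faces of the `(n+1)`-cube extends to a
permitted coloring of `I^{n+1}` — then for every `N ≥ n`, every coloring of the
absolutely incoming `(n-1)`-faces of `I^N` extends to a *unique* permitted coloring
of `I^N`. -/
theorem stmt8 (n : ℕ) (hn : 2 ≤ n) (X : Type*) (R : (Fin n → X) → (Fin n → X))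
    (hR : ∀ c0 : AbsIn (n + 1) n → X,
      ∃ c : FaceT (n + 1) (n - 1) → X, Permitted R c ∧ resAbs c = c0) :
    ∀ N : ℕ, n ≤ N → ∀ c0 : AbsIn N n → X,
      ∃! c : FaceT N (n - 1) → X, Permitted R c ∧ resAbs c = c0 := by
  obtain ⟨m, rfl⟩ : ∃ m, n = m + 1 := ⟨n - 1, by lia⟩
  have hsimplex : SimplexEquation R := fun d => by
    obtain ⟨c, hc, hcd⟩ := hR fun g => d g.1
    exact ⟨c, hc, (resAbs_eq_iff (by lia)).1 hcd⟩
  intro N hN c0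
  simp only [resAbs_eq_iff hN]
  exact hsimplex.existsUnique_permitted fun g hg => c0 ⟨g, _⟩
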